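/- Let λ > 0, let ρ and μ be probability measures on ℝⁿ = ℝᵐ × ℝᵈ, and let ψ : ℝⁿ → ℝ be bounded and twice continuously differentiable with ‖∇ψ(z)‖ ≤ L and ‖∇²ψ(z)‖ ≤ M for all z. Define J(ε) = ∫ εψ dρ + ∫ (εψ)^c dμ. Then there exist δ > 0 and C ≥ 0 such that for all |ε| ≤ δ, |J(ε) − ε(∫ ψ dρ − ∫ ψ dμ) + (ε²/2) ∫ ⟨∇ψ(z), ∇_λψ(z)⟩ dμ(z)| ≤ C|ε|³. -/

import Mathlib

/-!
The expansion holds pointwise and uniformly: for small `ε`,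
`|(εψ)^c(z) + εψ(z) + (ε²/2) ⟨∇ψ(z), ∇_λψ(z)⟩| ≤ C |ε|³`, and integrating this against `μ` gives
the claim, since the `ρ`-integrals cancel.

Replacing `ψ(z + h)` by its first-order Taylor polynomial costs at most `|ε| M ‖h‖²`, which is a
multiple of order `|ε|` of the cost of `h`. The linearised problem, minimising
`c_λ(z + h, z) - ε Dψ(z) h`, has minimiser `h = ε ∇_λψ(z)` and value
`-(ε²/2) ⟨∇ψ, ∇_λψ⟩`. Testing with this `h` gives the upper bound (`ctrans_le`); absorbing the
remainder into the cost and completing the square gives the lower bound (`le_ctrans`).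
Integrability of the `c`-transform follows from its upper semicontinuity (`measurable_ctrans`)
and the pointwise bound.
-/

open scoped RealInnerProductSpace
open MeasureTheory

noncomputable section

/-- The product space `ℝᵐ × ℝᵈ` whose points are written `z = (y, x)`. -/
abbrev Zsp (m d : ℕ) := EuclideanSpace ℝ (Fin m) × EuclideanSpace ℝ (Fin d)

/-- Weighted quadratic cost `c_λ(z,z') = (1/2)(λ‖y−y'‖² + ‖x−x'‖²)`. -/
noncomputable def cost (lam : ℝ) {m d : ℕ} (z z' : Zsp m d) : ℝ :=
  (lam * ‖z.1 - z'.1‖ ^ 2 + ‖z.2 - z'.2‖ ^ 2) / 2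

/-- The `c`-transform `φ^c(z') = inf_z (c_λ(z,z') − φ(z))`. -/
noncomputable def ctrans (lam : ℝ) {m d : ℕ} (φ : Zsp m d → ℝ) (z' : Zsp m d) : ℝ :=
  ⨅ z : Zsp m d, (cost lam z z' - φ z)

/-- Partial gradient in the `y` variable. -/
noncomputable def gradY {m d : ℕ} (F : Zsp m d → ℝ) (z : Zsp m d) :
    EuclideanSpace ℝ (Fin m) :=
  gradient (fun y => F (y, z.2)) z.1

/-- Partial gradient in the `x` variable. -/
noncomputable def gradX {m d : ℕ} (F : Zsp m d → ℝ) (z : Zsp m d) :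
    EuclideanSpace ℝ (Fin d) :=
  gradient (fun x => F (z.1, x)) z.2

/-- Rescaled gradient `∇_λF(z) = (∇_yF(z)/λ, ∇_xF(z))`. -/
noncomputable def gradLam (lam : ℝ) {m d : ℕ} (F : Zsp m d → ℝ) (z : Zsp m d) : Zsp m d :=
  (lam⁻¹ • gradY F z, gradX F z)

/-- `⟨∇F(z), ∇_λG(z)⟩ = ⟨∇_yF(z), ∇_yG(z)⟩/λ + ⟨∇_xF(z), ∇_xG(z)⟩`. -/
noncomputable def innerLam (lam : ℝ) {m d : ℕ} (F G : Zsp m d → ℝ) (z : Zsp m d) : ℝ :=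
  ⟪gradY F z, gradY G z⟫ / lam + ⟪gradX F z, gradX G z⟫

lemma inner_gradY {m d : ℕ} {ψ : Zsp m d → ℝ} (hψ : Differentiable ℝ ψ) (z : Zsp m d)
    (v : EuclideanSpace ℝ (Fin m)) : ⟪gradY ψ z, v⟫ = fderiv ℝ ψ z (v, 0) := by
  have h1 : HasFDerivAt (fun y => ψ (y, z.2))
      ((fderiv ℝ ψ z).comp (ContinuousLinearMap.inl ℝ _ _)) z.1 :=
    HasFDerivAt.comp z.1 (hψ (z.1, z.2)).hasFDerivAt (hasFDerivAt_prodMk_left z.1 z.2)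
  rw [gradY, ← InnerProductSpace.toDual_apply_apply, toDual_gradient, h1.fderiv]
  simp

lemma inner_gradX {m d : ℕ} {ψ : Zsp m d → ℝ} (hψ : Differentiable ℝ ψ) (z : Zsp m d)
    (v : EuclideanSpace ℝ (Fin d)) : ⟪gradX ψ z, v⟫ = fderiv ℝ ψ z (0, v) := by
  have h1 : HasFDerivAt (fun x => ψ (z.1, x))
      ((fderiv ℝ ψ z).comp (ContinuousLinearMap.inr ℝ _ _)) z.2 :=
    HasFDerivAt.comp z.2 (hψ (z.1, z.2)).hasFDerivAt (hasFDerivAt_prodMk_right z.1 z.2)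
  rw [gradX, ← InnerProductSpace.toDual_apply_apply, toDual_gradient, h1.fderiv]
  simp

lemma fderiv_eq_inner_add {m d : ℕ} {ψ : Zsp m d → ℝ} (hψ : Differentiable ℝ ψ) (z h : Zsp m d) :
    fderiv ℝ ψ z h = ⟪gradY ψ z, h.1⟫ + ⟪gradX ψ z, h.2⟫ := by
  rw [inner_gradY hψ, inner_gradX hψ, ← map_add]
  simp

lemma continuous_gradY {m d : ℕ} {ψ : Zsp m d → ℝ} (hC2 : ContDiff ℝ 2 ψ) :
    Continuous (gradY ψ) := by
  have hd : Differentiable ℝ ψ := hC2.differentiable (by norm_num)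
  have hc : Continuous (fderiv ℝ ψ) := hC2.continuous_fderiv (by norm_num)
  have : gradY ψ = fun z => (InnerProductSpace.toDual ℝ _).symm
      ((fderiv ℝ ψ z).comp (ContinuousLinearMap.inl ℝ _ _)) := by
    funext z
    refine ext_inner_right ℝ fun v => ?_
    rw [inner_gradY hd, InnerProductSpace.toDual_symm_apply]
    simp
  rw [this]
  exact (LinearIsometryEquiv.continuous _).comp (hc.clm_comp continuous_const)

lemma continuous_gradX {m d : ℕ} {ψ : Zsp m d → ℝ} (hC2 : ContDiff ℝ 2 ψ) :
    Continuous (gradX ψ) := by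
  have hd : Differentiable ℝ ψ := hC2.differentiable (by norm_num)
  have hc : Continuous (fderiv ℝ ψ) := hC2.continuous_fderiv (by norm_num)
  have : gradX ψ = fun z => (InnerProductSpace.toDual ℝ _).symm
      ((fderiv ℝ ψ z).comp (ContinuousLinearMap.inr ℝ _ _)) := by
    funext z
    refine ext_inner_right ℝ fun v => ?_
    rw [inner_gradX hd, InnerProductSpace.toDual_symm_apply]
    simp
  rw [this]
  exact (LinearIsometryEquiv.continuous _).comp (hc.clm_comp continuous_const)

lemma norm_gradY_le {m d : ℕ} {ψ : Zsp m d → ℝ} (hψ : Differentiable ℝ ψ) {L : ℝ}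
    (hL : ∀ z, ‖fderiv ℝ ψ z‖ ≤ L) (z : Zsp m d) : ‖gradY ψ z‖ ≤ L := by
  have h0 : 0 ≤ L := (norm_nonneg _).trans (hL z)
  have h1 : ‖gradY ψ z‖ ^ 2 ≤ L * ‖gradY ψ z‖ := by
    rw [← real_inner_self_eq_norm_sq, inner_gradY hψ]
    refine (le_abs_self _).trans (((fderiv ℝ ψ z).le_of_opNorm_le (hL z) _).trans ?_)
    simp [Prod.norm_def]
  by_contra! hlt
  nlinarith

lemma norm_gradX_le {m d : ℕ} {ψ : Zsp m d → ℝ} (hψ : Differentiable ℝ ψ) {L : ℝ}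
    (hL : ∀ z, ‖fderiv ℝ ψ z‖ ≤ L) (z : Zsp m d) : ‖gradX ψ z‖ ≤ L := by
  have h0 : 0 ≤ L := (norm_nonneg _).trans (hL z)
  have h1 : ‖gradX ψ z‖ ^ 2 ≤ L * ‖gradX ψ z‖ := by
    rw [← real_inner_self_eq_norm_sq, inner_gradX hψ]
    refine (le_abs_self _).trans (((fderiv ℝ ψ z).le_of_opNorm_le (hL z) _).trans ?_)
    simp [Prod.norm_def]
  by_contra! hlt
  nlinarith

lemma innerLam_self {m d : ℕ} (lam : ℝ) (ψ : Zsp m d → ℝ) (z : Zsp m d) :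
    innerLam lam ψ ψ z = ‖gradY ψ z‖ ^ 2 / lam + ‖gradX ψ z‖ ^ 2 := by
  simp [innerLam]

lemma innerLam_self_nonneg {m d : ℕ} {lam : ℝ} (hlam : 0 < lam) (ψ : Zsp m d → ℝ) (z : Zsp m d) :
    0 ≤ innerLam lam ψ ψ z := by
  rw [innerLam_self]
  positivity

lemma innerLam_self_le {m d : ℕ} {lam : ℝ} (hlam : 0 < lam) {ψ : Zsp m d → ℝ}
    (hψ : Differentiable ℝ ψ) {L : ℝ} (hL : ∀ z, ‖fderiv ℝ ψ z‖ ≤ L) (z : Zsp m d) :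
    innerLam lam ψ ψ z ≤ L ^ 2 / lam + L ^ 2 := by
  rw [innerLam_self]
  have h1 := norm_gradY_le hψ hL z
  have h2 := norm_gradX_le hψ hL z
  gcongr

lemma continuous_innerLam_self {m d : ℕ} (lam : ℝ) {ψ : Zsp m d → ℝ} (hC2 : ContDiff ℝ 2 ψ) :
    Continuous (innerLam lam ψ ψ) := by
  have h1 := continuous_gradY hC2
  have h2 := continuous_gradX hC2
  have : innerLam lam ψ ψ = fun z => ‖gradY ψ z‖ ^ 2 / lam + ‖gradX ψ z‖ ^ 2 := by
    funext z
    exact innerLam_self lam ψ z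
  rw [this]
  fun_prop

/-- First-order Taylor estimate; the constant `M` in place of the sharp `M / 2` is enough here. -/
lemma abs_taylor_le {E : Type*} [NormedAddCommGroup E] [NormedSpace ℝ E] {ψ : E → ℝ}
    (hC2 : ContDiff ℝ 2 ψ) {M : ℝ} (hM : ∀ z, ‖fderiv ℝ (fderiv ℝ ψ) z‖ ≤ M) (z w : E) :
    |ψ w - ψ z - fderiv ℝ ψ z (w - z)| ≤ M * ‖w - z‖ ^ 2 := by
  have hM0 : 0 ≤ M := (norm_nonneg (fderiv ℝ (fderiv ℝ ψ) z)).trans (hM z)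
  have hd : Differentiable ℝ ψ := hC2.differentiable (by norm_num)
  have hd2 : Differentiable ℝ (fderiv ℝ ψ) :=
    (hC2.fderiv_right (m := 1) (by norm_num)).differentiable (by norm_num)
  have key := (convex_closedBall z ‖w - z‖).norm_image_sub_le_of_norm_fderiv_le' (𝕜 := ℝ)
    (f := ψ) (φ := fderiv ℝ ψ z) (C := M * ‖w - z‖) (x := z) (y := w)
    (fun x _ => hd x) ?_ (by simp) (by simp [dist_eq_norm_sub])
  · rw [Real.norm_eq_abs] at key
    linarith [key, sq ‖w - z‖, mul_assoc M ‖w - z‖ ‖w - z‖,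
      congrArg (M * ·) (sq ‖w - z‖)]
  · intro x hx
    have h1 := convex_univ.norm_image_sub_le_of_norm_fderiv_le (𝕜 := ℝ)
      (f := fderiv ℝ ψ) (x := z) (y := x) (fun x _ => hd2 x) (fun x _ => hM x)
      (Set.mem_univ _) (Set.mem_univ _)
    exact h1.trans (mul_le_mul_of_nonneg_left (mem_closedBall_iff_norm.mp hx) hM0)

/-- The cost dominates the square of the (sup) norm of the product space. -/
lemma mul_norm_sq_le_cost {m d : ℕ} {lam : ℝ} (hlam : 0 < lam) (w z : Zsp m d) :
    min lam 1 / 2 * ‖w - z‖ ^ 2 ≤ cost lam w z := by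
  have h1 : min lam 1 ≤ lam := min_le_left _ _
  have h2 : min lam 1 ≤ 1 := min_le_right _ _
  have h0 : 0 < min lam 1 := lt_min hlam one_pos
  unfold cost
  rw [Prod.norm_def, Prod.fst_sub, Prod.snd_sub]
  rcases max_choice ‖w.1 - z.1‖ ‖w.2 - z.2‖ with h | h <;> rw [h] <;>
    nlinarith [sq_nonneg ‖w.1 - z.1‖, sq_nonneg ‖w.2 - z.2‖,
      mul_le_mul_of_nonneg_right h1 (sq_nonneg ‖w.1 - z.1‖),
      mul_le_mul_of_nonneg_right h2 (sq_nonneg ‖w.2 - z.2‖),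
      mul_nonneg hlam.le (sq_nonneg ‖w.1 - z.1‖)]

lemma mul_inner_le_young {E : Type*} [NormedAddCommGroup E] [InnerProductSpace ℝ E]
    {s : ℝ} (hs : 0 < s) (ε : ℝ) (g h : E) :
    ε * ⟪g, h⟫ ≤ s / 2 * ‖h‖ ^ 2 + ε ^ 2 * ‖g‖ ^ 2 / (2 * s) := by
  have h1 : ε * ⟪g, h⟫ ≤ |ε| * (‖g‖ * ‖h‖) := by
    refine (le_abs_self _).trans ?_
    rw [abs_mul]
    exact mul_le_mul_of_nonneg_left (abs_real_inner_le_norm g h) (abs_nonneg _)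
  refine h1.trans ?_
  have h2 : s / 2 * ‖h‖ ^ 2 + ε ^ 2 * ‖g‖ ^ 2 / (2 * s) - |ε| * (‖g‖ * ‖h‖)
      = (s * ‖h‖ - |ε| * ‖g‖) ^ 2 / (2 * s) := by
    rw [← sq_abs ε]
    field_simp
    ring
  have h3 : 0 ≤ (s * ‖h‖ - |ε| * ‖g‖) ^ 2 / (2 * s) := by positivity
  linarith

lemma cost_nonneg {m d : ℕ} {lam : ℝ} (hlam : 0 < lam) (w z : Zsp m d) : 0 ≤ cost lam w z := by
  unfold cost
  positivity

lemma bddBelow_cost_sub {m d : ℕ} {lam B : ℝ} (hlam : 0 < lam) {ψ : Zsp m d → ℝ}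
    (hB : ∀ z, |ψ z| ≤ B) (ε : ℝ) (z : Zsp m d) :
    BddBelow (Set.range fun w : Zsp m d => cost lam w z - ε * ψ w) := by
  refine ⟨-(|ε| * B), ?_⟩
  rintro _ ⟨w, rfl⟩
  have h1 : ε * ψ w ≤ |ε| * B := by
    refine (le_abs_self _).trans ?_
    rw [abs_mul]
    exact mul_le_mul_of_nonneg_left (hB w) (abs_nonneg _)
  have h2 := cost_nonneg hlam w z
  simp only
  linarith

/-- The `c`-transform is an infimum of continuous functions, hence upper semicontinuous. -/
lemma measurable_ctrans {m d : ℕ} {lam B : ℝ} (hlam : 0 < lam) {ψ : Zsp m d → ℝ}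
    (hB : ∀ z, |ψ z| ≤ B) (ε : ℝ) :
    Measurable (ctrans lam (fun z => ε * ψ z)) := by
  have h : UpperSemicontinuous
      (fun z : Zsp m d => ⨅ w : Zsp m d, (cost lam w z - ε * ψ w)) := by
    refine upperSemicontinuous_ciInf (fun z => bddBelow_cost_sub hlam hB ε z) fun w => ?_
    refine Continuous.upperSemicontinuous ?_
    unfold cost
    fun_prop
  exact h.measurable

/-- Upper half of the pointwise expansion: test the infimum at `z + ε ∇_λ ψ(z)`, the minimiser of
the linearised problem. -/
lemma ctrans_le {m d : ℕ} {lam M B : ℝ} (hlam : 0 < lam) {ψ : Zsp m d → ℝ}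
    (hB : ∀ z, |ψ z| ≤ B) (hC2 : ContDiff ℝ 2 ψ)
    (hM : ∀ z, ‖fderiv ℝ (fderiv ℝ ψ) z‖ ≤ M) (ε : ℝ) (z : Zsp m d) :
    ctrans lam (fun w => ε * ψ w) z ≤ -(ε * ψ z) - ε ^ 2 / 2 * innerLam lam ψ ψ z
      + |ε| ^ 3 * (M / min lam 1) * innerLam lam ψ ψ z := by
  have hd : Differentiable ℝ ψ := hC2.differentiable (by norm_num)
  have hM0 : 0 ≤ M := (norm_nonneg (fderiv ℝ (fderiv ℝ ψ) z)).trans (hM z)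
  have hk : 0 < min lam 1 := lt_min hlam one_pos
  set w : Zsp m d := z + ε • gradLam lam ψ z with hw
  have hwz : w - z = ε • gradLam lam ψ z := by simp [hw]
  have h1 : ctrans lam (fun w => ε * ψ w) z ≤ cost lam w z - ε * ψ w :=
    ciInf_le (bddBelow_cost_sub hlam hB ε z) w
  have hcost : cost lam w z = ε ^ 2 / 2 * innerLam lam ψ ψ z := by
    have e1 : w.1 - z.1 = ε • lam⁻¹ • gradY ψ z := congrArg Prod.fst hwz
    have e2 : w.2 - z.2 = ε • gradX ψ z := congrArg Prod.snd hwz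
    rw [cost, e1, e2, innerLam_self]
    simp only [norm_smul, Real.norm_eq_abs, mul_pow, sq_abs]
    field_simp
  have hD : fderiv ℝ ψ z (w - z) = ε * innerLam lam ψ ψ z := by
    rw [hwz, map_smul, fderiv_eq_inner_add hd, smul_eq_mul, innerLam]
    simp only [gradLam, inner_smul_right]
    field_simp
  have hT := abs_taylor_le hC2 hM z w
  have hN : ‖w - z‖ ^ 2 ≤ ε ^ 2 * innerLam lam ψ ψ z / min lam 1 := by
    have := mul_norm_sq_le_cost hlam w z
    rw [hcost] at this
    rw [le_div_iff₀ hk]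
    linarith
  have hE : -(ε * (ψ w - ψ z - fderiv ℝ ψ z (w - z)))
      ≤ |ε| * (M * (ε ^ 2 * innerLam lam ψ ψ z / min lam 1)) := by
    refine (neg_le_abs _).trans ?_
    rw [abs_mul]
    gcongr
    exact hT.trans (by gcongr)
  have hid : |ε| * (M * (ε ^ 2 * innerLam lam ψ ψ z / min lam 1))
      = |ε| ^ 3 * (M / min lam 1) * innerLam lam ψ ψ z := by
    rw [← sq_abs ε]
    ring
  rw [hid, hD] at hE
  rw [hcost] at h1
  linarith

/-- Lower half of the pointwise expansion. The Taylor remainder is absorbed into a fraction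
`θ = 2|ε|M / min(λ,1)` of the cost, and completing the square in what remains gives
`-ε²/(2(1-θ)) ⟨∇ψ, ∇_λψ⟩`, where `1/(1-θ) ≤ 1 + 2θ` because `θ ≤ 1/2`. -/
lemma le_ctrans {m d : ℕ} {lam M : ℝ} (hlam : 0 < lam) {ψ : Zsp m d → ℝ}
    (hC2 : ContDiff ℝ 2 ψ) (hM : ∀ z, ‖fderiv ℝ (fderiv ℝ ψ) z‖ ≤ M) (ε : ℝ)
    (hε : 2 * |ε| * M / min lam 1 ≤ 1 / 2) (z : Zsp m d) :
    -(ε * ψ z) - ε ^ 2 / 2 * innerLam lam ψ ψ z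
      - 2 * |ε| ^ 3 * (M / min lam 1) * innerLam lam ψ ψ z
      ≤ ctrans lam (fun w => ε * ψ w) z := by
  have hd : Differentiable ℝ ψ := hC2.differentiable (by norm_num)
  have hM0 : 0 ≤ M := (norm_nonneg (fderiv ℝ (fderiv ℝ ψ) z)).trans (hM z)
  have hk : 0 < min lam 1 := lt_min hlam one_pos
  have hq := innerLam_self_nonneg hlam ψ z
  refine le_ciInf fun w => ?_
  set θ : ℝ := 2 * |ε| * M / min lam 1 with hθ
  have hθ0 : 0 ≤ θ := by positivity
  have ha : 0 < 1 - θ := by linarith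
  have hT := abs_taylor_le hC2 hM z w
  have hE : ε * (ψ w - ψ z - fderiv ℝ ψ z (w - z)) ≤ θ * cost lam w z := by
    refine (le_abs_self _).trans ?_
    rw [abs_mul]
    calc |ε| * |ψ w - ψ z - fderiv ℝ ψ z (w - z)|
        ≤ |ε| * (M * ‖w - z‖ ^ 2) := by gcongr
      _ = θ * (min lam 1 / 2 * ‖w - z‖ ^ 2) := by
          rw [hθ]
          field_simp
      _ ≤ θ * cost lam w z := by
          gcongr
          exact mul_norm_sq_le_cost hlam w z
  have y1 := mul_inner_le_young (mul_pos ha hlam) ε (gradY ψ z) (w.1 - z.1)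
  have y2 := mul_inner_le_young ha ε (gradX ψ z) (w.2 - z.2)
  have hD : ε * fderiv ℝ ψ z (w - z)
      ≤ (1 - θ) * cost lam w z + ε ^ 2 * innerLam lam ψ ψ z / (2 * (1 - θ)) := by
    rw [fderiv_eq_inner_add hd, mul_add]
    refine (add_le_add y1 y2).trans (le_of_eq ?_)
    rw [cost, innerLam_self]
    field_simp
    ring
  have hfrac : ε ^ 2 * innerLam lam ψ ψ z / (2 * (1 - θ))
      ≤ ε ^ 2 * innerLam lam ψ ψ z * (1 / 2 + θ) := by
    rw [div_le_iff₀ (by linarith), mul_assoc]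
    refine le_mul_of_one_le_right (by positivity) ?_
    nlinarith
  have hid : ε ^ 2 * innerLam lam ψ ψ z * θ
      = 2 * |ε| ^ 3 * (M / min lam 1) * innerLam lam ψ ψ z := by
    rw [hθ, ← sq_abs ε]
    ring
  simp only
  linarith

/-- second-order Taylor expansion of
`J(ε) = ∫ εψ dρ + ∫ (εψ)^c dμ` at `ε = 0` with third-order remainder:
`|J(ε) − ε(∫ψdρ − ∫ψdμ) + (ε²/2)∫⟨∇ψ, ∇_λψ⟩dμ| ≤ C|ε|³`. -/
theorem dual_objective_second_order_expansion
    (m d : ℕ) (lam L M B : ℝ) (hlam : 0 < lam)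
    (ρ μ : Measure (Zsp m d)) [IsProbabilityMeasure ρ] [IsProbabilityMeasure μ]
    (ψ : Zsp m d → ℝ)
    (hB : ∀ z, |ψ z| ≤ B)
    (hC2 : ContDiff ℝ 2 ψ)
    (hL : ∀ z, ‖fderiv ℝ ψ z‖ ≤ L)
    (hM : ∀ z, ‖fderiv ℝ (fderiv ℝ ψ) z‖ ≤ M) :
    ∃ δ > (0 : ℝ), ∃ C ≥ (0 : ℝ), ∀ ε : ℝ, |ε| ≤ δ →
      |(∫ z, ε * ψ z ∂ρ + ∫ z', ctrans lam (fun z => ε * ψ z) z' ∂μ)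
          - ε * (∫ z, ψ z ∂ρ - ∫ z, ψ z ∂μ)
          + (ε ^ 2 / 2) * ∫ z, innerLam lam ψ ψ z ∂μ|
        ≤ C * |ε| ^ 3 := by
  have hd : Differentiable ℝ ψ := hC2.differentiable (by norm_num)
  have hM0 : 0 ≤ M := (norm_nonneg (fderiv ℝ (fderiv ℝ ψ) 0)).trans (hM 0)
  have hk : 0 < min lam 1 := lt_min hlam one_pos
  set K : ℝ := L ^ 2 / lam + L ^ 2 with hK
  have hK0 : 0 ≤ K := by positivity
  refine ⟨min lam 1 / (4 * (M + 1)), by positivity, 2 * (M / min lam 1) * K, by positivity,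
    fun ε hε => ?_⟩
  have hsmall : 2 * |ε| * M / min lam 1 ≤ 1 / 2 := by
    rw [le_div_iff₀ (by positivity)] at hε
    rw [div_le_iff₀ hk]
    nlinarith [abs_nonneg ε]
  have hpt : ∀ z, |ctrans lam (fun w => ε * ψ w) z + ε * ψ z
      + ε ^ 2 / 2 * innerLam lam ψ ψ z| ≤ 2 * (M / min lam 1) * K * |ε| ^ 3 := by
    intro z
    have h1 := ctrans_le hlam hB hC2 hM ε z
    have h2 := le_ctrans hlam hC2 hM ε hsmall z
    have hq0 := innerLam_self_nonneg hlam ψ z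
    have hq := innerLam_self_le hlam hd hL z
    have hc : 0 ≤ |ε| ^ 3 * (M / min lam 1) := by positivity
    have h3 := mul_le_mul_of_nonneg_left hq hc
    have h4 := mul_nonneg hc hq0
    rw [abs_le]
    constructor <;> linarith
  have iψ : Integrable ψ μ :=
    Integrable.of_bound hC2.continuous.aestronglyMeasurable B (ae_of_all _ hB)
  have iq : Integrable (innerLam lam ψ ψ) μ := by
    refine Integrable.of_bound (continuous_innerLam_self lam hC2).aestronglyMeasurable K
      (ae_of_all _ fun z => ?_)
    rw [Real.norm_of_nonneg (innerLam_self_nonneg hlam ψ z)]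
    exact innerLam_self_le hlam hd hL z
  have iA : Integrable (fun z => ε * ψ z) μ := iψ.const_mul ε
  have iQ : Integrable (fun z => ε ^ 2 / 2 * innerLam lam ψ ψ z) μ := iq.const_mul _
  have ir : Integrable (fun z => ctrans lam (fun w => ε * ψ w) z + ε * ψ z
      + ε ^ 2 / 2 * innerLam lam ψ ψ z) μ :=
    Integrable.of_bound (((measurable_ctrans hlam hB ε).aestronglyMeasurable.add
      iA.aestronglyMeasurable).add iQ.aestronglyMeasurable) _ (ae_of_all _ hpt)
  have ic : Integrable (fun z => ctrans lam (fun w => ε * ψ w) z) μ := by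
    refine ((ir.sub iQ).sub iA).congr (ae_of_all _ fun z => ?_)
    simp only [Pi.sub_apply]
    ring
  have hint : (∫ z, ε * ψ z ∂ρ + ∫ z', ctrans lam (fun z => ε * ψ z) z' ∂μ)
          - ε * (∫ z, ψ z ∂ρ - ∫ z, ψ z ∂μ)
          + (ε ^ 2 / 2) * ∫ z, innerLam lam ψ ψ z ∂μ
      = ∫ z, (ctrans lam (fun w => ε * ψ w) z + ε * ψ z
          + ε ^ 2 / 2 * innerLam lam ψ ψ z) ∂μ := by
    have icA : Integrable (fun z => ctrans lam (fun w => ε * ψ w) z + ε * ψ z) μ := ic.add iA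
    rw [integral_add icA iQ, integral_add ic iA, integral_const_mul, integral_const_mul,
      integral_const_mul]
    ring
  rw [hint]
  have := norm_integral_le_of_norm_le_const (μ := μ)
    (f := fun z => ctrans lam (fun w => ε * ψ w) z + ε * ψ z + ε ^ 2 / 2 * innerLam lam ψ ψ z)
    (ae_of_all _ hpt)
  simpa using this
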